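/- Let Θ be a real symplectic 2n×2n matrix (ΘᵀJΘ = J) and α ∈ ℂ with |α| = 1, α ≠ 1. Define the 2n×2n complex matrix M_α = (1/(1 − ᾱ)) · J · (ᾱI + I − ᾱΘ − Θ^{−1}). Then M_α is Hermitian, and the negative Maslov index i(Γ(Θ), Δ, Γ(αΘ)), computed in (ℂ^{2n} × ℂ^{2n}, (−σ_ℂ) ⊕ σ_ℂ), equals the number of negative eigenvalues of M_α counted with multiplicity. -/

import Mathlib

open scoped ComplexOrder

noncomputable section

/-- `ℂ^{2n}`, written with coordinates indexed by `Fin n ⊕ Fin n`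
(first block = `q`-coordinates, second block = `p`-coordinates). -/
abbrev CV (n : ℕ) := (Fin n ⊕ Fin n) → ℂ

/-- The sesquilinear extension `σ_ℂ(X,Y) = σ(X̄,Y)` of the standard symplectic form
`σ(x,y) = ⟨Jx,y⟩`, `J = [[0,−I],[I,0]]`, to `ℂ^{2n}` (conjugate-linear in the first
argument). -/
def sigmaC (n : ℕ) : CV n →ₛₗ[starRingEnd ℂ] CV n →ₗ[ℂ] ℂ :=
  LinearMap.mk₂'ₛₗ (starRingEnd ℂ) (RingHom.id ℂ)
    (fun x y => (∑ i : Fin n, (starRingEnd ℂ) (x (Sum.inl i)) * y (Sum.inr i)) -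
      ∑ i : Fin n, (starRingEnd ℂ) (x (Sum.inr i)) * y (Sum.inl i))
    (by intro x x' y; simp [add_mul, Finset.sum_add_distrib]; ring)
    (by
      intro c x y
      simp only [Pi.smul_apply, smul_eq_mul, map_mul]
      rw [mul_sub, Finset.mul_sum, Finset.mul_sum]
      congr 1 <;> exact Finset.sum_congr rfl (by intros; ring))
    (by intro x y y'; simp [mul_add, Finset.sum_add_distrib]; ring)
    (by
      intro c x y
      simp only [Pi.smul_apply, smul_eq_mul, RingHom.id_apply]
      rw [mul_sub, Finset.mul_sum, Finset.mul_sum]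
      congr 1 <;> exact Finset.sum_congr rfl (by intros; ring))

/-- The orthogonal of a subspace with respect to a sesquilinear form. -/
def sesqOrth {W : Type*} [AddCommGroup W] [Module ℂ W]
    (f : W →ₛₗ[starRingEnd ℂ] W →ₗ[ℂ] ℂ) (L : Submodule ℂ W) : Submodule ℂ W where
  carrier := {u | ∀ w ∈ L, f u w = 0}
  add_mem' := by
    intro a b ha hb w hw
    simp [map_add, ha w hw, hb w hw]
  zero_mem' := by
    intro w hw
    simp
  smul_mem' := by
    intro c u hu w hw
    simp [LinearMap.map_smulₛₗ, hu w hw]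

/-- A complex subspace is Lagrangian for a sesquilinear form when it coincides with its
orthogonal. -/
def IsLagrangianC {W : Type*} [AddCommGroup W] [Module ℂ W]
    (f : W →ₛₗ[starRingEnd ℂ] W →ₗ[ℂ] ℂ) (L : Submodule ℂ W) : Prop :=
  L = sesqOrth f L

/-- Negative inertia index of the (Hermitian) Maslov form of a triple of complex
Lagrangian subspaces: the supremum of complex dimensions of subspaces of
`L1 ∩ (L0 + L2)` on which `m(l1) = σ_ℂ(l0,l2)` is negative definite (negativity in the
complex order: real and `< 0`). -/
def maslovIndexC {W : Type*} [AddCommGroup W] [Module ℂ W]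
    (f : W →ₛₗ[starRingEnd ℂ] W →ₗ[ℂ] ℂ) (L0 L1 L2 : Submodule ℂ W) : ℕ :=
  sSup {d : ℕ | ∃ S : Submodule ℂ W, S ≤ L1 ⊓ (L0 ⊔ L2) ∧
    (∀ v ∈ S, v ≠ 0 → ∀ l0 ∈ L0, ∀ l2 ∈ L2, v = l0 + l2 → f l0 l2 < 0) ∧
    Module.finrank ℂ ↥S = d}

/-- The direct sum of two sesquilinear forms on a product space. -/
def sesqProd {W1 W2 : Type*} [AddCommGroup W1] [Module ℂ W1] [AddCommGroup W2] [Module ℂ W2]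
    (f : W1 →ₛₗ[starRingEnd ℂ] W1 →ₗ[ℂ] ℂ) (g : W2 →ₛₗ[starRingEnd ℂ] W2 →ₗ[ℂ] ℂ) :
    (W1 × W2) →ₛₗ[starRingEnd ℂ] (W1 × W2) →ₗ[ℂ] ℂ :=
  LinearMap.mk₂'ₛₗ (starRingEnd ℂ) (RingHom.id ℂ)
    (fun x y => f x.1 y.1 + g x.2 y.2)
    (by intro x x' y; simp [map_add]; ring)
    (by intro c x y; simp [LinearMap.map_smulₛₗ, smul_eq_mul, mul_add])
    (by intro x y y'; simp [map_add]; ring)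
    (by intro c x y; simp [smul_eq_mul, mul_add])

/-- The direct sum of `k` copies of a sesquilinear form. -/
def sesqPi {W : Type*} [AddCommGroup W] [Module ℂ W] (k : ℕ)
    (f : W →ₛₗ[starRingEnd ℂ] W →ₗ[ℂ] ℂ) :
    (Fin k → W) →ₛₗ[starRingEnd ℂ] (Fin k → W) →ₗ[ℂ] ℂ :=
  LinearMap.mk₂'ₛₗ (starRingEnd ℂ) (RingHom.id ℂ)
    (fun x y => ∑ i, f (x i) (y i))
    (by intro x x' y; simp [map_add, Finset.sum_add_distrib])
    (by intro c x y; simp [LinearMap.map_smulₛₗ, Finset.mul_sum])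
    (by intro x y y'; simp [map_add, Finset.sum_add_distrib])
    (by intro c x y; simp [Finset.mul_sum])

/-- The vertical Lagrangian subspace `Π = {(p,0)} ⊂ ℂ^{2n}`. -/
def PiV (n : ℕ) : Submodule ℂ (CV n) where
  carrier := {x | ∀ i, x (Sum.inr i) = 0}
  add_mem' := by intro a b ha hb i; simp [ha i, hb i]
  zero_mem' := by intro i; simp
  smul_mem' := by intro c x hx i; simp [hx i]

/-- The standard symplectic matrix `J = [[0,−I],[I,0]]`. -/
def symplJ (n : ℕ) : Matrix (Fin n ⊕ Fin n) (Fin n ⊕ Fin n) ℝ :=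
  Matrix.fromBlocks 0 (-1) 1 0

/-- The `ℂ`-linear action on `ℂ^{2n}` of a real `2n×2n` matrix. -/
def cAction {n : ℕ} (Θ : Matrix (Fin n ⊕ Fin n) (Fin n ⊕ Fin n) ℝ) : CV n →ₗ[ℂ] CV n :=
  (Θ.map (Complex.ofReal)).mulVecLin


/-- The form `(−σ_ℂ) ⊕ σ_ℂ` on `ℂ^{2n} × ℂ^{2n}`. -/
def sigma2C (n : ℕ) :
    (CV n × CV n) →ₛₗ[starRingEnd ℂ] (CV n × CV n) →ₗ[ℂ] ℂ :=
  sesqProd (-(sigmaC n)) (sigmaC n)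

/-- The form `(−σ_ℂ)^{⊕k} ⊕ σ_ℂ^{⊕k}` on `Σ^k × Σ^k`, `Σ = ℂ^{2n}`. -/
def bigSigmaC (n k : ℕ) :
    ((Fin k → CV n) × (Fin k → CV n)) →ₛₗ[starRingEnd ℂ]
      ((Fin k → CV n) × (Fin k → CV n)) →ₗ[ℂ] ℂ :=
  sesqProd (-(sesqPi k (sigmaC n))) (sesqPi k (sigmaC n))

/-- The Lagrangian subspace `Π² = Π × Π` of `ℂ^{2n} × ℂ^{2n}`. -/
def Pi2Sub (n : ℕ) : Submodule ℂ (CV n × CV n) := (PiV n).prod (PiV n)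

/-- The diagonal Lagrangian subspace `Δ = {(ξ,ξ)}` of `ℂ^{2n} × ℂ^{2n}`. -/
def DiaSub (n : ℕ) : Submodule ℂ (CV n × CV n) :=
  LinearMap.graph (LinearMap.id : CV n →ₗ[ℂ] CV n)

/-- The Lagrangian subspace `Π^{2k} = Π × ⋯ × Π` of `Σ^k × Σ^k`. -/
def Pi2kSub (n k : ℕ) : Submodule ℂ ((Fin k → CV n) × (Fin k → CV n)) :=
  (Submodule.pi Set.univ fun _ : Fin k => PiV n).prod
    (Submodule.pi Set.univ fun _ : Fin k => PiV n)

/-- The graph `Γ = {(ξ1,…,ξk,Θξ1,…,Θξk)}` of the diagonal action of `Θ` on `Σ^k`. -/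
def GamSub (n k : ℕ) (Θ : Matrix (Fin n ⊕ Fin n) (Fin n ⊕ Fin n) ℝ) :
    Submodule ℂ ((Fin k → CV n) × (Fin k → CV n)) :=
  LinearMap.graph (LinearMap.pi fun i : Fin k => (cAction Θ).comp (LinearMap.proj i))

/-- The graph `Δ^↺ = {(ξ1,…,ξk,ξ2,…,ξk,ξ1)}` of the cyclic shift on `Σ^k`. -/
def DcycSub (n k : ℕ) [NeZero k] : Submodule ℂ ((Fin k → CV n) × (Fin k → CV n)) :=
  LinearMap.graph (LinearMap.funLeft ℂ (CV n) (fun i : Fin k => i + 1))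

/-- The matrix `M_α = (1/(1−ᾱ)) J (ᾱ + 1 − ᾱΘ − Θ⁻¹)` over `ℂ`. -/
def Malpha (n : ℕ) (Θ : Matrix (Fin n ⊕ Fin n) (Fin n ⊕ Fin n) ℝ) (α : ℂ) :
    Matrix (Fin n ⊕ Fin n) (Fin n ⊕ Fin n) ℂ :=
  (1 / (1 - (starRingEnd ℂ) α)) •
    ((symplJ n).map Complex.ofReal *
      ((starRingEnd ℂ) α • (1 : Matrix (Fin n ⊕ Fin n) (Fin n ⊕ Fin n) ℂ) + 1
        - (starRingEnd ℂ) α • Θ.map Complex.ofReal - (Θ.map Complex.ofReal)⁻¹))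

/-- Inertia computation in diagonalising coordinates. -/
theorem maslovIndexC_eq_card_of_diag {ι W : Type*} [Fintype ι] [AddCommGroup W] [Module ℂ W]
    (f : W →ₛₗ[starRingEnd ℂ] W →ₗ[ℂ] ℂ) (L0 L1 L2 : Submodule ℂ W) (lam : ι → ℝ)
    (e : W →ₗ[ℂ] (ι → ℂ)) (g : (ι → ℂ) →ₗ[ℂ] W)
    (hg : ∀ z, g z ∈ L1) (heg : ∀ z, e (g z) = z) (hge : ∀ v ∈ L1, g (e v) = v)
    (hL : L1 ≤ L0 ⊔ L2)
    (hf : ∀ v ∈ L1, ∀ l0 ∈ L0, ∀ l2 ∈ L2, v = l0 + l2 →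
      f l0 l2 = ((∑ i, lam i * ‖e v i‖ ^ 2 : ℝ) : ℂ)) :
    maslovIndexC f L0 L1 L2 = (Finset.univ.filter fun i => lam i < 0).card := by
  classical
  rw [← Fintype.card_subtype]
  have hub : ∀ d ∈ {d : ℕ | ∃ S : Submodule ℂ W, S ≤ L1 ⊓ (L0 ⊔ L2) ∧
    (∀ v ∈ S, v ≠ 0 → ∀ l0 ∈ L0, ∀ l2 ∈ L2, v = l0 + l2 → f l0 l2 < 0) ∧
    Module.finrank ℂ ↥S = d}, d ≤ Fintype.card {i // lam i < 0} := by
    rintro d ⟨S, hS, hneg, rfl⟩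
    let T : S →ₗ[ℂ] ({i // lam i < 0} → ℂ) :=
      (LinearMap.funLeft ℂ ℂ (Subtype.val : {i // lam i < 0} → ι)) ∘ₗ e ∘ₗ S.subtype
    have hT : Function.Injective T := by
      rw [injective_iff_map_eq_zero]
      rintro ⟨v, hv⟩ h0
      by_contra hne
      have hv0 : v ≠ 0 := fun h => hne (by ext; exact h)
      obtain ⟨l0, h0', l2, h2, hsum⟩ := Submodule.mem_sup.1 (hS hv).2
      have h1 := hneg v hv hv0 l0 h0' l2 h2 hsum.symm
      rw [hf v (hS hv).1 l0 h0' l2 h2 hsum.symm] at h1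
      have h1' : (∑ i, lam i * ‖e v i‖ ^ 2 : ℝ) < 0 := by exact_mod_cast h1
      refine absurd h1' (not_lt.2 (Finset.sum_nonneg fun i _ => ?_))
      by_cases hi : lam i < 0
      · have : e v i = 0 := congrFun h0 ⟨i, hi⟩
        simp [this]
      · exact mul_nonneg (not_lt.1 hi) (by positivity)
    simpa using LinearMap.finrank_le_finrank_of_injective hT
  have hmem : Fintype.card {i // lam i < 0} ∈ {d : ℕ | ∃ S : Submodule ℂ W,
      S ≤ L1 ⊓ (L0 ⊔ L2) ∧
    (∀ v ∈ S, v ≠ 0 → ∀ l0 ∈ L0, ∀ l2 ∈ L2, v = l0 + l2 → f l0 l2 < 0) ∧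
    Module.finrank ℂ ↥S = d} := by
    let E : ({i // lam i < 0} → ℂ) →ₗ[ℂ] (ι → ℂ) :=
      Function.ExtendByZero.linearMap ℂ (Subtype.val : {i // lam i < 0} → ι)
    have hE1 : ∀ z (i : {i // lam i < 0}), E z i = z i := fun z i =>
      Subtype.val_injective.extend_apply z 0 i
    have hE2 : ∀ z i, ¬ lam i < 0 → E z i = 0 := fun z i hi =>
      Function.extend_apply' z (0 : ι → ℂ) i (by rintro ⟨a, rfl⟩; exact hi a.2)
    have hinj : Function.Injective (g ∘ₗ E) := by
      intro z w h
      have h' : E z = E w := by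
        have := congrArg e h
        simpa [heg] using this
      ext i
      rw [← hE1 z i, ← hE1 w i, h']
    refine ⟨LinearMap.range (g ∘ₗ E), ?_, ?_, ?_⟩
    · rintro _ ⟨z, rfl⟩
      exact ⟨hg _, hL (hg _)⟩
    · rintro _ ⟨z, rfl⟩ hne l0 h0 l2 h2 hsum
      rw [hf _ (hg _) l0 h0 l2 h2 hsum]
      have : (∑ i, lam i * ‖e ((g ∘ₗ E) z) i‖ ^ 2 : ℝ) < 0 := by
        simp only [LinearMap.comp_apply, heg]
        have hz : ∃ i : {i // lam i < 0}, z i ≠ 0 := by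
          by_contra hcon
          push Not at hcon
          have : z = 0 := funext hcon
          exact hne (by simp [this])
        obtain ⟨i, hi⟩ := hz
        refine Finset.sum_neg' (fun j _ => ?_) ⟨i, Finset.mem_univ _, ?_⟩
        · by_cases hj : lam j < 0
          · exact mul_nonpos_of_nonpos_of_nonneg hj.le (by positivity)
          · simp [hE2 z j hj]
        · rw [hE1]
          exact mul_neg_of_neg_of_pos i.2 (by positivity)
      exact_mod_cast this
    · rw [LinearMap.finrank_range_of_inj hinj]
      simp
  exact le_antisymm (csSup_le ⟨_, hmem⟩ hub) (le_csSup ⟨_, hub⟩ hmem)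

theorem sigmaC_eq_dot (n : ℕ) (x y : CV n) :
    sigmaC n x y = - (star x ⬝ᵥ ((symplJ n).map Complex.ofReal).mulVec y) := by
  simp only [sigmaC, LinearMap.mk₂'ₛₗ_apply, symplJ, Matrix.fromBlocks_map, dotProduct,
    Fintype.sum_sum_type, Matrix.mulVec, Matrix.fromBlocks_apply₁₁, Matrix.fromBlocks_apply₁₂,
    Matrix.fromBlocks_apply₂₁, Matrix.fromBlocks_apply₂₂]
  simp [Matrix.one_apply, apply_ite]
  ring

/-- Complex matrix `J`: adjoint. -/
theorem symplJ_conjTranspose (n : ℕ) :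
    ((symplJ n).map Complex.ofReal).conjTranspose = -(symplJ n).map Complex.ofReal := by
  ext (i | i) (j | j) <;>
    simp [symplJ, Matrix.one_apply, eq_comm, apply_ite]

theorem symplJ_transpose (n : ℕ) :
    ((symplJ n).map Complex.ofReal).transpose = -(symplJ n).map Complex.ofReal := by
  ext (i | i) (j | j) <;>
    simp [symplJ, Matrix.one_apply, eq_comm, apply_ite]

theorem symplJ_sq (n : ℕ) :
    (symplJ n).map Complex.ofReal * (symplJ n).map Complex.ofReal = -1 := by
  simp only [symplJ, Matrix.fromBlocks_map, Matrix.fromBlocks_multiply, ← Matrix.fromBlocks_one]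
  ext (i | i) (j | j) <;> simp [Matrix.mul_apply, Matrix.one_apply, apply_ite]

theorem conj_facts (α : ℂ) (hα : ‖α‖ = 1) (hα1 : α ≠ 1) :
    (starRingEnd ℂ) α * α = 1 ∧ 1 - α ≠ 0 ∧ 1 - (starRingEnd ℂ) α ≠ 0 := by
  refine ⟨by rw [mul_comm, Complex.mul_conj, Complex.normSq_eq_norm_sq, hα]; simp,
    sub_ne_zero.2 hα1.symm, fun h => hα1 ?_⟩
  have : (starRingEnd ℂ) α = 1 := (sub_eq_zero.1 h).symm
  simpa using congrArg (starRingEnd ℂ) this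

section algebra

variable {m : Type*} [Fintype m] [DecidableEq m]

open Matrix in
theorem aux_hermitian (J T Ti : Matrix m m ℂ) (α c : ℂ) (hJ : Jᴴ = -J)
    (h1 : Tᴴ * J = J * Ti) (h2 : Tiᴴ * J = J * T)
    (hα : star α * α = 1) (hc : star c = - star α * c) :
    (c • (J * (star α • (1 : Matrix m m ℂ) + 1 - star α • T - Ti))).IsHermitian := by
  have e : star (c * star α) = -c := by
    rw [star_mul, star_star, hc]
    linear_combination (-c) * hα
  unfold Matrix.IsHermitian
  simp only [conjTranspose_smul, conjTranspose_mul, conjTranspose_add, conjTranspose_sub,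
    conjTranspose_one, star_star, hJ, hc, mul_neg, mul_add, mul_sub, add_mul, sub_mul,
    smul_mul_assoc, mul_smul_comm, h1, h2, one_mul, mul_one, smul_add, smul_sub, smul_neg,
    smul_smul]
  simp only [neg_mul, neg_smul, e]
  rw [mul_comm (star α) c]
  simp only [neg_smul, neg_neg, sub_neg_eq_add]
  abel

open Matrix in
theorem aux_transpose (J T Ti : Matrix m m ℂ) (α c d : ℂ) (hJ : Jᵀ = -J)
    (h1 : Tᵀ * J = J * Ti) (h2 : Tiᵀ * J = J * T) (h3 : Tiᴴ * J = J * T)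
    (h5 : T * Ti = 1)
    (hd : star d = c) (hc : c * (1 - star α) = 1) :
    (c • (J * (star α • (1 : Matrix m m ℂ) + 1 - star α • T - Ti)))ᵀ =
      (1 - d • (1 - Ti))ᴴ * (J * (1 - Ti)) := by
  have h4 : J * T * Ti = J := by rw [mul_assoc, h5, mul_one]
  have e : c * star α = c - 1 := by linear_combination -hc
  simp only [conjTranspose_smul, conjTranspose_sub, transpose_smul, transpose_mul, transpose_add,
    transpose_sub, transpose_one,
    conjTranspose_one, hd, hJ, mul_neg, mul_add, mul_sub, add_mul, sub_mul,
    smul_mul_assoc, mul_smul_comm, h1, h2, h3, one_mul, mul_one, smul_add, smul_sub, smul_neg,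
    smul_smul, ← mul_assoc, h4, e]
  simp only [sub_smul, one_smul]
  abel

end algebra

theorem symplectic_relations {n : ℕ} (Θ : Matrix (Fin n ⊕ Fin n) (Fin n ⊕ Fin n) ℝ)
    (hΘ : Θ.transpose * symplJ n * Θ = symplJ n) :
    (Θ.map Complex.ofReal) * (Θ.map Complex.ofReal)⁻¹ = 1 ∧
    (Θ.map Complex.ofReal)⁻¹ * (Θ.map Complex.ofReal) = 1 ∧
    (Θ.map Complex.ofReal).transpose * (symplJ n).map Complex.ofReal * Θ.map Complex.ofReal =
      (symplJ n).map Complex.ofReal ∧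
    (Θ.map Complex.ofReal).transpose * (symplJ n).map Complex.ofReal =
      (symplJ n).map Complex.ofReal * (Θ.map Complex.ofReal)⁻¹ ∧
    ((Θ.map Complex.ofReal)⁻¹).transpose * (symplJ n).map Complex.ofReal =
      (symplJ n).map Complex.ofReal * (Θ.map Complex.ofReal) ∧
    (Θ.map Complex.ofReal).conjTranspose = (Θ.map Complex.ofReal).transpose ∧
    ((Θ.map Complex.ofReal)⁻¹).conjTranspose = ((Θ.map Complex.ofReal)⁻¹).transpose := by
  have hC : (Θ.map Complex.ofReal).transpose * (symplJ n).map Complex.ofReal *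
      Θ.map Complex.ofReal = (symplJ n).map Complex.ofReal := by
    have := congrArg (fun A => A.map (Complex.ofRealHom)) hΘ
    simp only [Matrix.map_mul] at this
    exact this
  have hT : (Θ.map Complex.ofReal).conjTranspose = (Θ.map Complex.ofReal).transpose := by
    ext i j; simp
  have hJ2 := symplJ_sq n
  set T := Θ.map Complex.ofReal
  set J := (symplJ n).map Complex.ofReal
  have hinv : (-J * T.transpose * J) * T = 1 := by
    rw [mul_assoc, mul_assoc, ← mul_assoc T.transpose, hC, neg_mul, hJ2, neg_neg]
  have hdet : IsUnit T.det := Matrix.isUnit_det_of_left_inverse hinv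
  have a1 : T * T⁻¹ = 1 := Matrix.mul_nonsing_inv T hdet
  have a2 : T⁻¹ * T = 1 := Matrix.nonsing_inv_mul T hdet
  refine ⟨a1, a2, hC, ?_, ?_, hT, ?_⟩
  · conv_rhs => rw [← hC, mul_assoc, a1, mul_one]
  · conv_lhs => rw [← hC]
    rw [← mul_assoc, ← mul_assoc, ← Matrix.transpose_mul, a1, Matrix.transpose_one, one_mul]
  · rw [Matrix.conjTranspose_nonsing_inv, hT, Matrix.transpose_nonsing_inv]

/-- Value of the quadratic form of the transpose of a Hermitian matrix in the coordinates
given by the eigenvector unitary. -/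
theorem quad_transpose_diag {m : Type*} [Fintype m] [DecidableEq m] (M : Matrix m m ℂ)
    (hM : M.IsHermitian) (x : m → ℂ) :
    star x ⬝ᵥ M.transpose.mulVec x =
      ((∑ i, hM.eigenvalues i *
        ‖((hM.eigenvectorUnitary : Matrix m m ℂ).transpose.mulVec x) i‖ ^ 2 : ℝ) : ℂ) := by
  have h := hM.spectral_theorem
  rw [Unitary.conjStarAlgAut_apply] at h
  set U : Matrix m m ℂ := (hM.eigenvectorUnitary : Matrix m m ℂ)
  have h2 : M.transpose = (U.transpose).conjTranspose *
      Matrix.diagonal (RCLike.ofReal ∘ hM.eigenvalues) * U.transpose := by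
    conv_lhs => rw [h]
    rw [Matrix.transpose_mul, Matrix.transpose_mul, Matrix.diagonal_transpose, ← mul_assoc]
    rfl
  rw [h2, ← Matrix.mulVec_mulVec, ← Matrix.mulVec_mulVec, Matrix.dotProduct_mulVec,
    ← Matrix.star_mulVec]
  set y := U.transpose.mulVec x
  simp only [dotProduct, Matrix.mulVec_diagonal, Complex.ofReal_sum]
  refine Finset.sum_congr rfl fun i _ => ?_
  have : star (y i) * y i = ((‖y i‖ ^ 2 : ℝ) : ℂ) := by
    rw [← Complex.normSq_eq_norm_sq, ← Complex.mul_conj, mul_comm]; rfl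
  rw [Complex.ofReal_mul, ← this]
  simp
  ring

/-- `M_α` is Hermitian and the negative Maslov index
`i(Γ(Θ), Δ, Γ(αΘ))` equals the number of negative eigenvalues of `M_α` counted with
multiplicity. -/
theorem maslov_index_eq_negative_eigenvalues
    (n : ℕ) (Θ : Matrix (Fin n ⊕ Fin n) (Fin n ⊕ Fin n) ℝ)
    (hΘ : Θ.transpose * symplJ n * Θ = symplJ n)
    (α : ℂ) (hα : ‖α‖ = 1) (hα1 : α ≠ 1) :
    (Malpha n Θ α).IsHermitian ∧
    ∀ hM : (Malpha n Θ α).IsHermitian,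
      maslovIndexC (sigma2C n) (LinearMap.graph (cAction Θ)) (DiaSub n)
          (LinearMap.graph (α • cAction Θ))
        = (Finset.univ.filter fun i => hM.eigenvalues i < 0).card := by
  obtain ⟨a1, a2, hC, h1, h2, t1, t2⟩ := symplectic_relations Θ hΘ
  obtain ⟨c1, c2, c3⟩ := conj_facts α hα hα1
  refine ⟨?_, fun hM => ?_⟩
  · refine aux_hermitian _ _ _ α _ (symplJ_conjTranspose n) (by rw [t1, h1]) (by rw [t2, h2]) c1 ?_
    have c1' : star α * α = 1 := c1
    have c3' : 1 - star α ≠ 0 := c3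
    change star (1 / (1 - star α)) = -star α * (1 / (1 - star α))
    rw [star_div₀, star_sub, star_star, star_one]
    field_simp
    linear_combination -c1'
  · have hMT : (Malpha n Θ α).transpose = _ :=
      aux_transpose _ _ _ α (1 / (1 - (starRingEnd ℂ) α)) (1 / (1 - α)) (symplJ_transpose n) h1 h2
        (by rw [t2, h2]) a1 (by rw [star_div₀, star_sub, star_one]; rfl)
        (by change 1 / (1 - (starRingEnd ℂ) α) * (1 - (starRingEnd ℂ) α) = 1; field_simp)
    set U : Matrix (Fin n ⊕ Fin n) (Fin n ⊕ Fin n) ℂ :=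
      (hM.eigenvectorUnitary : Matrix (Fin n ⊕ Fin n) (Fin n ⊕ Fin n) ℂ) with hU
    obtain ⟨V, hUV, hVU⟩ : ∃ V : Matrix (Fin n ⊕ Fin n) (Fin n ⊕ Fin n) ℂ,
        U.transpose * V = 1 ∧ V * U.transpose = 1 := by
      refine ⟨(star U).transpose, ?_, ?_⟩
      · rw [← Matrix.transpose_mul, Unitary.star_mul_self_of_mem hM.eigenvectorUnitary.2,
          Matrix.transpose_one]
      · rw [← Matrix.transpose_mul, Unitary.mul_star_self_of_mem hM.eigenvectorUnitary.2,
          Matrix.transpose_one]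
    have hdec : ∀ x : CV n, ∀ l0 ∈ LinearMap.graph (cAction Θ),
        ∀ l2 ∈ LinearMap.graph (α • cAction Θ), (x, x) = l0 + l2 →
        sigma2C n l0 l2 = star x ⬝ᵥ (Malpha n Θ α).transpose.mulVec x := by
      rintro x ⟨a, a'⟩ ha ⟨b, b'⟩ hb hab
      rw [LinearMap.mem_graph_iff] at ha hb
      simp only [cAction, LinearMap.smul_apply, Matrix.mulVecLin_apply] at ha hb
      subst ha hb
      simp only [Prod.mk_add_mk, Prod.mk.injEq] at hab
      obtain ⟨e1, e2⟩ := hab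
      set T := Θ.map Complex.ofReal
      set J := (symplJ n).map Complex.ofReal
      have e3 : T⁻¹.mulVec x = a + α • b := by
        conv_lhs => rw [e2]
        rw [Matrix.mulVec_add, Matrix.mulVec_smul, Matrix.mulVec_mulVec, Matrix.mulVec_mulVec, a2,
          Matrix.one_mulVec, Matrix.one_mulVec]
      have e4 : (1 - T⁻¹).mulVec x = (1 - α) • b := by
        rw [Matrix.sub_mulVec, e3, Matrix.one_mulVec, e1, sub_smul, one_smul]; abel
      have e5 : (1 - (1 / (1 - α)) • (1 - T⁻¹)).mulVec x = a := by
        rw [Matrix.sub_mulVec, Matrix.smul_mulVec, e4, smul_smul, one_div, inv_mul_cancel₀ c2,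
          one_smul, Matrix.one_mulVec, e1]; abel
      rw [hMT, ← Matrix.mulVec_mulVec, Matrix.dotProduct_mulVec, ← Matrix.star_mulVec, e5,
        ← Matrix.mulVec_mulVec, e4]
      have e6 : star (T.mulVec a) ⬝ᵥ J.mulVec (T.mulVec b) = star a ⬝ᵥ J.mulVec b := by
        rw [Matrix.star_mulVec, t1, ← Matrix.dotProduct_mulVec, Matrix.mulVec_mulVec,
          Matrix.mulVec_mulVec, hC]
      simp only [sigma2C, sesqProd, LinearMap.mk₂'ₛₗ_apply, LinearMap.neg_apply, sigmaC_eq_dot,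
        Matrix.mulVec_smul, dotProduct_smul, smul_eq_mul]
      rw [e6]
      ring
    refine maslovIndexC_eq_card_of_diag _ _ _ _ hM.eigenvalues
      (U.transpose.mulVecLin ∘ₗ LinearMap.fst ℂ (CV n) (CV n))
      ((LinearMap.prod LinearMap.id LinearMap.id) ∘ₗ V.mulVecLin) ?_ ?_ ?_ ?_ ?_
    · intro z
      simp [DiaSub, LinearMap.mem_graph_iff]
    · intro z
      change U.transpose.mulVec (V.mulVec z) = z
      rw [Matrix.mulVec_mulVec, hUV, Matrix.one_mulVec]
    · rintro ⟨x, y⟩ hv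
      have : y = x := by simpa [DiaSub, LinearMap.mem_graph_iff] using hv
      subst this
      change (V.mulVec (U.transpose.mulVec y), V.mulVec (U.transpose.mulVec y)) = (y, y)
      rw [Matrix.mulVec_mulVec, hVU, Matrix.one_mulVec]
    · rintro ⟨x, y⟩ hv
      have : y = x := by simpa [DiaSub, LinearMap.mem_graph_iff] using hv
      subst this
      set T := Θ.map Complex.ofReal
      let b : CV n := (1 / (1 - α)) • (y - T⁻¹.mulVec y)
      have hb : (1 - α) • b = y - T⁻¹.mulVec y := by
        simp only [b]
        rw [smul_smul, one_div, mul_inv_cancel₀ c2, one_smul]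
      refine Submodule.mem_sup.2 ⟨(y - b, T.mulVec (y - b)), ?_, (b, α • T.mulVec b), ?_, ?_⟩
      · rw [LinearMap.mem_graph_iff]; rfl
      · rw [LinearMap.mem_graph_iff]; rfl
      · ext1
        · simp
        · change T.mulVec (y - b) + α • T.mulVec b = y
          rw [← Matrix.mulVec_smul, ← Matrix.mulVec_add]
          have : y - b + α • b = T⁻¹.mulVec y := by
            rw [sub_smul, one_smul] at hb
            rw [← sub_sub_cancel y (T⁻¹.mulVec y), ← hb]; abel
          rw [this, Matrix.mulVec_mulVec, a1, Matrix.one_mulVec]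
    · rintro ⟨x, y⟩ hv l0 h0 l2 h2' hsum
      have : y = x := by simpa [DiaSub, LinearMap.mem_graph_iff] using hv
      subst this
      rw [hdec y l0 h0 l2 h2' hsum]
      exact quad_transpose_diag _ hM y

end
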